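/- Let x and y be two distinct nonzero vectors of (ZMod 2)^n and let d ≥ 2. Then the number of d-dimensional subspaces of (ZMod 2)^n that contain both x and y is at most (2^n choose d − 2), and hence at most (2^n)^{d−2}. -/

import Mathlib

/-- The vector space of `n`-dimensional vectors over the field with two elements. -/
abbrev BV (n : ℕ) := Fin n → ZMod 2

/-!
By Steinitz exchange, an independent set `s` contained in a `d`-dimensional subspace extends to a
basis of it by `d - |s|` further vectors. The subspace is recovered from these vectors as their
span together with `s`, so there are no more such subspaces than `(d - |s|)`-element subsets of
the ambient space. Over the field with two elements, distinct nonzero vectors are independent.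
-/

section DivisionRing

open Module Submodule

variable {K V : Type*} [DivisionRing K] [AddCommGroup V] [Module K V] {s : Set V}

theorem exists_finset_card_eq_span_union_eq {F : Submodule K V} [FiniteDimensional K F]
    (hs : LinearIndepOn K id s) (hsF : s ⊆ F) :
    ∃ t : Finset V, t.card = finrank K F - s.ncard ∧ span K (s ∪ t) = F := by
  classical
  obtain ⟨b, hbF, hsb, hFb, hb⟩ := exists_linearIndepOn_id_extension hs hsF
  have hspan : span K b = F := span_eq_of_le F hbF hFb
  have hbfin : b.Finite := by
    rw [← Cardinal.lt_aleph0_iff_set_finite, ← rank_span_set hb, hspan]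
    exact rank_lt_aleph0 K F
  lift s to Finset V using hbfin.subset hsb
  lift b to Finset V using hbfin
  refine ⟨b \ s, ?_, ?_⟩
  · rw [Finset.card_sdiff_of_subset (Finset.coe_subset.1 hsb), Set.ncard_coe_finset, ← hspan,
      finrank_span_finset_eq_card hb]
  · rw [Finset.coe_sdiff, Set.union_sdiff_cancel hsb, hspan]

theorem flats_through_pair_bound_general [Finite V] (hs : LinearIndepOn K id s) (d : ℕ) :
    Nat.card {F : Submodule K V // finrank K F = d ∧ s ⊆ F} ≤
      (Nat.card V).choose (d - s.ncard) ∧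
    Nat.card {F : Submodule K V // finrank K F = d ∧ s ⊆ F} ≤
      Nat.card V ^ (d - s.ncard) := by
  have hsubset : {F : Submodule K V | finrank K F = d ∧ s ⊆ F} ⊆
      (fun t : Finset V ↦ span K (s ∪ t)) '' Set.powersetCard V (d - s.ncard) := by
    rintro F ⟨rfl, hsF⟩
    exact exists_finset_card_eq_span_union_eq hs hsF
  have hchoose : Nat.card {F : Submodule K V // finrank K F = d ∧ s ⊆ F} ≤
      (Nat.card V).choose (d - s.ncard) :=
    calc {F : Submodule K V | finrank K F = d ∧ s ⊆ F}.ncard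
      _ ≤ ((fun t : Finset V ↦ span K (s ∪ t)) '' Set.powersetCard V (d - s.ncard)).ncard :=
        Set.ncard_le_ncard hsubset
      _ ≤ (Set.powersetCard V (d - s.ncard)).ncard := Set.ncard_image_le
      _ = (Nat.card V).choose (d - s.ncard) := Set.powersetCard.card _ _
  exact ⟨hchoose, hchoose.trans (Nat.choose_le_pow _ _)⟩

end DivisionRing

theorem linearIndepOn_id_pair_zmod_two {V : Type*} [AddCommGroup V] [Module (ZMod 2) V] {x y : V}
    (hx : x ≠ 0) (hy : y ≠ 0) (hxy : x ≠ y) : LinearIndepOn (ZMod 2) id {x, y} := by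
  refine linearIndepOn_id_pair hx fun a ↦ ?_
  obtain rfl | rfl : a = 0 ∨ a = 1 := by decide +revert
  · simpa using hy.symm
  · simpa using hxy

/-- For distinct nonzero vectors `x, y` of `(ZMod 2)^n` and `d ≥ 2`, the number of
`d`-dimensional subspaces containing both `x` and `y` is at most
`(2^n choose d − 2)`, and hence at most `(2^n)^{d−2}`. -/
theorem flats_through_pair_bound (n d : ℕ) (hd : 2 ≤ d) (x y : BV n)
    (hx : x ≠ 0) (hy : y ≠ 0) (hxy : x ≠ y) :
    Nat.card {F : Submodule (ZMod 2) (BV n) //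
        Module.finrank (ZMod 2) F = d ∧ x ∈ F ∧ y ∈ F} ≤
      Nat.choose (2 ^ n) (d - 2) ∧
    Nat.card {F : Submodule (ZMod 2) (BV n) //
        Module.finrank (ZMod 2) F = d ∧ x ∈ F ∧ y ∈ F} ≤
      (2 ^ n) ^ (d - 2) := by
  simpa [Set.pair_subset_iff, Set.ncard_pair hxy] using
    flats_through_pair_bound_general (linearIndepOn_id_pair_zmod_two hx hy hxy) d
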